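/- Let n ≥ 1 and let A = {a, b₁,…,b_n, c₁,…,c_n, z} consist of 2n+2 distinct letters. Let π be the pair on A with π₀ listing A in the order a, b₁, c₁, b₂, c₂, …, b_n, c_n, z (i.e. π₀(a)=1, π₀(b_i)=2i, π₀(c_i)=2i+1, π₀(z)=2n+2) and π₁ listing A in the order z, c₁, b₁, c₂, b₂, …, c_n, b_n, a. Then π is irreducible and Alt(A) ⊆ G(π). -/

import Mathlib

open Equiv

/-- A (labeled) pair on alphabet `A`: two bijections from `A` to positions.
Positions are `Fin (Fintype.card A)`, 0-indexed: position `j : Fin N`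
corresponds to the position `j+1 ∈ {1,…,N}` of the paper. -/
abbrev RPair (A : Type*) [Fintype A] := Bool → (A ≃ Fin (Fintype.card A))

variable {A : Type*} [Fintype A]

/-- Irreducibility: `π₁(π₀⁻¹({1,…,k})) = {1,…,k}` only for `k = N`. -/
def PairIrreducible (π : RPair A) : Prop :=
  ∀ k : Fin (Fintype.card A),
    (∀ x : A, π false x ≤ k → π true x ≤ k) → (k : ℕ) + 1 = Fintype.card A

/-- Type-ε right Rauzy induction sends `π` to `π'`.  Here `zc = π_ε⁻¹(N)` and
`zo = π_{1-ε}⁻¹(N)` are characterized as the letters of maximal position. -/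
def RightMove (π π' : RPair A) : Prop :=
  ∃ ε : Bool, ∃ zc zo : A,
    (∀ x : A, π ε x ≤ π ε zc) ∧
    (∀ x : A, π (!ε) x ≤ π (!ε) zo) ∧
    π' ε = π ε ∧
    (∀ b : A, π (!ε) b ≤ π (!ε) zc → π' (!ε) b = π (!ε) b) ∧
    ((π' (!ε) zo : ℕ) = (π (!ε) zc : ℕ) + 1) ∧
    (∀ b : A, ¬ π (!ε) b ≤ π (!ε) zc → b ≠ zo → (π' (!ε) b : ℕ) = (π (!ε) b : ℕ) + 1)

/-- Type-ε left Rauzy induction sends `π` to `π'`.  Here `ac = π_ε⁻¹(1)` and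
`ao = π_{1-ε}⁻¹(1)` are characterized as the letters of minimal position. -/
def LeftMove (π π' : RPair A) : Prop :=
  ∃ ε : Bool, ∃ ac ao : A,
    (∀ x : A, π ε ac ≤ π ε x) ∧
    (∀ x : A, π (!ε) ao ≤ π (!ε) x) ∧
    π' ε = π ε ∧
    (∀ b : A, π (!ε) ac ≤ π (!ε) b → π' (!ε) b = π (!ε) b) ∧
    ((π' (!ε) ao : ℕ) = (π (!ε) ac : ℕ) - 1) ∧
    (∀ b : A, ¬ π (!ε) ac ≤ π (!ε) b → b ≠ ao → (π' (!ε) b : ℕ) = (π (!ε) b : ℕ) - 1)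

/-- The Rauzy class `R(π)`: pairs reachable by right Rauzy inductions. -/
def RClass (π : RPair A) : Set (RPair A) := {ρ | Relation.ReflTransGen RightMove π ρ}

/-- The extended Rauzy class `E(π)`: pairs reachable by left and right Rauzy inductions. -/
def EClass (π : RPair A) : Set (RPair A) :=
  {ρ | Relation.ReflTransGen (fun x y => RightMove x y ∨ LeftMove x y) π ρ}

/-- `π ∘ ν = (π₀ ∘ ν, π₁ ∘ ν)`. -/
def pairRename (π : RPair A) (ν : Equiv.Perm A) : RPair A := fun ε => ν.trans (π ε)

/-- The renaming set `G(π) = {ν : π ∘ ν ∈ E(π)}`. -/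
def renamings (π : RPair A) : Set (Equiv.Perm A) := {ν | pairRename π ν ∈ EClass π}

/-- The non-labeled permutation `π₁ ∘ π₀⁻¹`. -/
def nonlabeled (π : RPair A) : Equiv.Perm (Fin (Fintype.card A)) :=
  (π false).symm.trans (π true)

/-- The position `1` (smallest). -/
def posFirst (A : Type*) [Fintype A] [Nonempty A] : Fin (Fintype.card A) :=
  ⟨0, Fintype.card_pos⟩

/-- The position `N` (largest). -/
def posLast (A : Type*) [Fintype A] [Nonempty A] : Fin (Fintype.card A) :=
  ⟨Fintype.card A - 1, Nat.sub_lt Fintype.card_pos Nat.one_pos⟩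

/-- A pair is standard if `π₀(π₁⁻¹(1)) = π₁(π₀⁻¹(1)) = N`. -/
def PairStandard [Nonempty A] (π : RPair A) : Prop :=
  π false ((π true).symm (posFirst A)) = posLast A ∧
  π true ((π false).symm (posFirst A)) = posLast A

/-- `S` is the permutation `S(π)` of the paper. -/
def IsS [Nonempty A] (π : RPair A) (S : Equiv.Perm A) : Prop :=
  ∀ b : A,
    (π true b = posFirst A → S b = (π false).symm (posFirst A)) ∧
    (π true b ≠ posFirst A →
      (((π true b : ℕ) = (π true ((π false).symm (posLast A)) : ℕ) + 1 →
        (π false (S b) : ℕ) = (π false ((π true).symm (posLast A)) : ℕ) + 1) ∧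
      ((π true b : ℕ) ≠ (π true ((π false).symm (posLast A)) : ℕ) + 1 →
        (π false (S b) : ℕ) =
          (π false ((π true).symm
            ⟨(π true b : ℕ) - 1,
              Nat.lt_of_le_of_lt (Nat.sub_le _ _) (π true b).isLt⟩) : ℕ) + 1)))

/-- The marked letter `X(π) = π₀⁻¹(1)`. -/
def XOf [Nonempty A] (π : RPair A) : A := (π false).symm (posFirst A)

/-- `Q` is the permutation `Q(π)` of the paper (constructed from `S = S(π)`). -/
def IsQ [Nonempty A] (π : RPair A) (S Q : Equiv.Perm A) : Prop :=
  Q (XOf π) = XOf π ∧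
  ∀ b : A, b ≠ XOf π →
    (S b = XOf π → Q b = S (S b)) ∧ (S b ≠ XOf π → Q b = S b)

/-- `Λ`: the multiset of cardinalities of the orbits of `Q` on `A ∖ {X}`
(for `Q` fixing `X`): the nontrivial cycle lengths of `Q` together with one `1`
for each fixed point of `Q` other than `X`. -/
def lamOf [DecidableEq A] (Q : Equiv.Perm A) : Multiset ℕ :=
  Q.cycleType + Multiset.replicate ((Finset.univ.filter fun a => Q a = a).card - 1) 1

/-- The centralizer `Z(π)` of `(X(π), Q(π))`. -/
def ZOf [Nonempty A] (π : RPair A) (Q : Equiv.Perm A) : Set (Equiv.Perm A) :=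
  {ν | ν (XOf π) = XOf π ∧ ν⁻¹ * Q * ν = Q}

/-!
Write a pair as two words in its letters. A type-`ε` right induction moves the last letter of the
other word to just after the winning letter `z`, so iterating it rotates the block following `z`;
left inductions rotate the block preceding the first letter. A standard pair has words `a P w Q z`
and `z P' w Q' a` for every letter `w` other than `a` and `z`, and four rotations lead to
`w P z Q a` and `a P' z Q' w`: the same pair with `a`, `w`, `z` permuted cyclically. Renamings form
a group, and these 3-cycles through `a` and `z` generate the alternating group.
-/

section Lists

variable {α : Type*}

theorem exists_eq_cons_append_cons_append_singleton {l : List α} {a w z : α}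
    (ha : l.head? = some a) (hz : l.getLast? = some z) (hw : w ∈ l) (hwa : w ≠ a) (hwz : w ≠ z) :
    ∃ P Q, l = a :: P ++ w :: Q ++ [z] := by
  obtain ⟨s, t, rfl⟩ := List.append_of_mem hw
  rcases s with _ | ⟨a', P⟩
  · simp_all
  rcases t.eq_nil_or_concat with rfl | ⟨Q, z', rfl⟩
  · simp_all [List.getLast?_cons]
  exact ⟨P, Q, by simp_all [List.getLast?_cons]⟩

theorem map_cons_append_cons_append_singleton {f : α → α} {x y t : α} {P Q : List α}
    (hnd : (x :: P ++ y :: Q ++ [t]).Nodup) (hf : ∀ u, u ≠ x → u ≠ y → u ≠ t → f u = u) :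
    (x :: P ++ y :: Q ++ [t]).map f = f x :: P ++ f y :: Q ++ [f t] := by
  have hfix : ∀ u ∈ P ++ Q, f u = u :=
    fun u hu ↦ hf u (by grind) (by grind) (by grind)
  have hP : P.map f = P :=
    (List.map_congr_left fun u hu ↦ hfix u (List.mem_append_left _ hu)).trans P.map_id'
  have hQ : Q.map f = Q :=
    (List.map_congr_left fun u hu ↦ hfix u (List.mem_append_right _ hu)).trans Q.map_id'
  simp [hP, hQ]

end Lists

section ThreeCycles

variable {α : Type*} [DecidableEq α]

theorem swap_mul_swap_mem_of_forall {H : Subgroup (Perm α)} {a z : α}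
    (h : ∀ w, w ≠ a → w ≠ z → swap a w * swap a z ∈ H) {x y : α} (hxy : x ≠ y) :
    swap x y * swap a z ∈ H := by
  have through_a : ∀ w, w ≠ a → swap a w * swap a z ∈ H := by
    intro w hwa
    rcases eq_or_ne w z with rfl | hwz
    · simp [H.one_mem]
    · exact h w hwa hwz
  rcases eq_or_ne x a with rfl | hxa
  · exact through_a y hxy.symm
  rcases eq_or_ne y a with rfl | hya
  · rw [swap_comm]
    exact through_a x hxa
  have key : swap x y * swap a z =
      swap a x * swap a z * (swap a y * swap a z)⁻¹ * (swap a x * swap a z) := by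
    rw [← swap_mul_swap_mul_swap hya hxy.symm, swap_comm y a]
    simp [mul_assoc]
  rw [key]
  exact H.mul_mem (H.mul_mem (through_a x hxa) (H.inv_mem (through_a y hya))) (through_a x hxa)

theorem alternatingGroup_le_of_forall_swap_mul_swap_mem [Fintype α] {H : Subgroup (Perm α)}
    {a z : α} (h : ∀ w, w ≠ a → w ≠ z → swap a w * swap a z ∈ H) : alternatingGroup α ≤ H := by
  rw [← Perm.closure_three_cycles_eq_alternating, Subgroup.closure_le]
  intro σ hσ
  obtain ⟨x, hx⟩ : ∃ x, σ x ≠ x := by simpa [Equiv.ext_iff] using hσ.ne_one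
  have key : σ = swap x (σ x) * swap a z * (swap (σ x) (σ (σ x)) * swap a z)⁻¹ := by
    simpa [mul_assoc] using hσ.eq_swap_mul_swap_iff_mem_support.2 (Perm.mem_support.2 hx)
  rw [key]
  exact H.mul_mem (swap_mul_swap_mem_of_forall h hx.symm)
    (H.inv_mem (swap_mul_swap_mem_of_forall h (σ.injective.ne hx.symm)))

end ThreeCycles

/-- The row of a pair given by the position map `p`, read as a word: the letters of `A` in
increasing order of position. -/
def word (p : A ≃ Fin (Fintype.card A)) : List A := List.ofFn p.symm

section Word

variable (p : A ≃ Fin (Fintype.card A))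

theorem nodup_word : (word p).Nodup := List.nodup_ofFn.2 p.symm.injective

theorem mem_word (x : A) : x ∈ word p := by simp [word, List.mem_ofFn']

theorem idxOf_word [DecidableEq A] (x : A) : (word p).idxOf x = p x := by
  have hlt : (p x : ℕ) < (word p).length := by simp [word]
  simpa [word] using (nodup_word p).idxOf_getElem _ hlt

theorem word_injective : Function.Injective (word (A := A)) := by
  classical
  intro p q h
  ext x
  rw [← idxOf_word, ← idxOf_word, h]

theorem exists_word_eq_of_perm {l : List A} (h : l.Perm (word p)) : ∃ q, word q = l := by
  classical
  have hnodup : l.Nodup := h.nodup_iff.2 (nodup_word p)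
  have hmem : ∀ x, x ∈ l := fun x ↦ h.mem_iff.2 (mem_word p x)
  have hlength : Fintype.card A = l.length := by simp [h.length_eq, word]
  refine ⟨((finCongr hlength).trans (hnodup.getEquivOfForallMemList l hmem)).symm, ?_⟩
  exact List.ext_getElem (by simp [word, hlength]) (by simp [word])

theorem word_trans (ν : Perm A) : word (ν.trans p) = (word p).map ν.symm := by
  simp [word, List.map_ofFn, Function.comp_def]

theorem head?_word [Nonempty A] : (word p).head? = some (p.symm (posFirst A)) := by
  simp [word, posFirst, List.head?_eq_getElem?, Fintype.card_pos]

theorem getLast?_word [Nonempty A] : (word p).getLast? = some (p.symm (posLast A)) := by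
  simp [word, posLast, List.getLast?_eq_getElem?, Fintype.card_pos]

variable {p} in
theorem apply_le_of_word_eq_append_singleton {t : List A} {z : A} (h : word p = t ++ [z]) (u : A) :
    p u ≤ p z := by
  classical
  have hnodup : (t ++ [z]).Nodup := h ▸ nodup_word p
  have hz : z ∉ t := by grind
  have hu := h ▸ mem_word p u
  rw [Fin.le_def, ← idxOf_word, ← idxOf_word, h, List.idxOf_append_of_notMem hz]
  grind

variable {p} in
theorem le_apply_of_word_eq_cons {t : List A} {z : A} (h : word p = z :: t) (u : A) :
    p z ≤ p u := by
  classical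
  simp [Fin.le_def, ← idxOf_word, h]

end Word

/-- The two words of a pair, the row of type `ε` first. -/
def words (π : RPair A) (ε : Bool) : List A × List A := (word (π ε), word (π (!ε)))

theorem exists_rightMove {π : RPair A} {ε : Bool} {t x y : List A} {z o : A}
    (h : words π ε = (t ++ [z], x ++ z :: (y ++ [o]))) :
    ∃ ρ, RightMove π ρ ∧ words ρ ε = (t ++ [z], x ++ z :: o :: y) := by
  classical
  obtain ⟨hwin, hlose⟩ := Prod.mk.inj h
  obtain ⟨q, hq⟩ := exists_word_eq_of_perm (π !ε) (l := x ++ z :: o :: y)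
    (hlose ▸ ((List.perm_append_singleton o y).symm.cons z).append_left x)
  have hnodup := hlose ▸ nodup_word (π !ε)
  refine ⟨Function.update π (!ε) q,
    ⟨ε, z, o, apply_le_of_word_eq_append_singleton hwin,
      apply_le_of_word_eq_append_singleton (t := x ++ z :: y) (by simp [hlose]),
      by simp, fun u ↦ ?_, ?_, fun u ↦ ?_⟩,
    by simp [words, hwin, hq]⟩
  all_goals simp only [Function.update_self, Fin.le_def, Fin.ext_iff, ← idxOf_word, hlose, hq,
    List.idxOf_append, List.idxOf_cons]
  · grind
  · grind
  · have hu := hlose ▸ mem_word (π !ε) u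
    grind

theorem exists_leftMove {π : RPair A} {ε : Bool} {t x y : List A} {z o : A}
    (h : words π ε = (z :: t, o :: (y ++ z :: x))) :
    ∃ ρ, LeftMove π ρ ∧ words ρ ε = (z :: t, y ++ o :: z :: x) := by
  classical
  obtain ⟨hwin, hlose⟩ := Prod.mk.inj h
  obtain ⟨q, hq⟩ := exists_word_eq_of_perm (π !ε) (l := y ++ o :: z :: x)
    (hlose ▸ List.perm_middle)
  have hnodup := hlose ▸ nodup_word (π !ε)
  refine ⟨Function.update π (!ε) q,
    ⟨ε, z, o, le_apply_of_word_eq_cons hwin, le_apply_of_word_eq_cons hlose,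
      by simp, fun u ↦ ?_, ?_, fun u ↦ ?_⟩,
    by simp [words, hwin, hq]⟩
  all_goals
    simp only [Function.update_self, Fin.le_def, Fin.ext_iff, ← idxOf_word, hlose, hq,
      List.idxOf_append, List.idxOf_cons]
    grind

/-- Reachability by Rauzy inductions in terms of words: every pair with words `s` has a pair with
words `t` in its extended Rauzy class. Quantifying over the type `ε` of the first word makes the
relation invariant under exchanging the two rows. -/
def WordsReach (s t : List A × List A) : Prop :=
  ∀ (π : RPair A) (ε : Bool), words π ε = s → ∃ ρ ∈ EClass π, words ρ ε = t

namespace WordsReach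

theorem refl (s : List A × List A) : WordsReach s s :=
  fun π _ h ↦ ⟨π, .refl, h⟩

theorem trans {s t u : List A × List A} (hst : WordsReach s t) (htu : WordsReach t u) :
    WordsReach s u := by
  intro π ε hs
  obtain ⟨ρ, hρ, ht⟩ := hst π ε hs
  obtain ⟨σ, hσ, hu⟩ := htu ρ ε ht
  exact ⟨σ, Relation.ReflTransGen.trans hρ hσ, hu⟩

instance : Trans (WordsReach (A := A)) WordsReach WordsReach := ⟨trans⟩

theorem swap {u v u' v' : List A} (h : WordsReach (u, v) (u', v')) :
    WordsReach (v, u) (v', u') := by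
  intro π ε hπ
  obtain ⟨ρ, hρ, hρw⟩ := h π (!ε) (by simp_all [words])
  exact ⟨ρ, hρ, by simp_all [words]⟩

theorem rotate_right (t x y₁ y₂ : List A) (z : A) :
    WordsReach (t ++ [z], x ++ z :: (y₁ ++ y₂)) (t ++ [z], x ++ z :: (y₂ ++ y₁)) := by
  induction y₂ using List.reverseRecOn generalizing y₁ with
  | nil => simpa using refl _
  | append_singleton y₂ o ih =>
    intro π ε hπ
    obtain ⟨ρ, hmove, hρ⟩ := exists_rightMove (y := y₁ ++ y₂) (by simpa using hπ)
    obtain ⟨σ, hσ, hσw⟩ := ih (o :: y₁) ρ ε (by simpa using hρ)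
    exact ⟨σ, .head (.inl hmove) hσ, by simpa using hσw⟩

theorem rotate_left (t x y₁ y₂ : List A) (z : A) :
    WordsReach (z :: t, y₁ ++ y₂ ++ z :: x) (z :: t, y₂ ++ y₁ ++ z :: x) := by
  induction y₁ generalizing y₂ with
  | nil => simpa using refl _
  | cons o y₁ ih =>
    intro π ε hπ
    obtain ⟨ρ, hmove, hρ⟩ := exists_leftMove (y := y₁ ++ y₂) (by simpa using hπ)
    obtain ⟨σ, hσ, hσw⟩ := ih (y₂ ++ [o]) ρ ε (by simpa using hρ)
    exact ⟨σ, .head (.inr hmove) hσ, by simpa using hσw⟩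

theorem cycle_letters (a w z : A) (P Q P' Q' : List A) :
    WordsReach (a :: P ++ w :: Q ++ [z], z :: P' ++ w :: Q' ++ [a])
      (w :: P ++ z :: Q ++ [a], a :: P' ++ z :: Q' ++ [w]) :=
  calc
    WordsReach (a :: P ++ w :: Q ++ [z], z :: P' ++ w :: Q' ++ [a])
        (a :: P ++ w :: Q ++ [z], z :: Q' ++ a :: P' ++ [w]) := by
      simpa using rotate_right (a :: P ++ w :: Q) [] (P' ++ [w]) (Q' ++ [a]) z
    WordsReach _ (w :: Q ++ a :: P ++ [z], z :: Q' ++ a :: P' ++ [w]) := by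
      simpa using (rotate_left (Q' ++ a :: P' ++ [w]) [] (a :: P) (w :: Q) z).swap
    WordsReach _ (w :: Q ++ a :: P ++ [z], a :: P' ++ z :: Q' ++ [w]) := by
      simpa using rotate_left (Q ++ a :: P ++ [z]) [] (z :: Q') (a :: P') w
    WordsReach _ (w :: P ++ z :: Q ++ [a], a :: P' ++ z :: Q' ++ [w]) := by
      simpa using (rotate_right (a :: P' ++ z :: Q') [] (Q ++ [a]) (P ++ [z]) w).swap

end WordsReach

section Renamings

variable {π ρ : RPair A}

theorem RightMove.rename (h : RightMove π ρ) (ν : Perm A) :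
    RightMove (pairRename π ν) (pairRename ρ ν) := by
  obtain ⟨ε, zc, zo, hzc, hzo, hε, hfix, hzo', hshift⟩ := h
  refine ⟨ε, ν.symm zc, ν.symm zo, ?_⟩
  simp only [pairRename, Equiv.trans_apply, Equiv.apply_symm_apply, hε]
  exact ⟨fun x ↦ hzc _, fun x ↦ hzo _, trivial, fun x ↦ hfix _, hzo',
    fun x hx hne ↦ hshift _ hx (mt ν.eq_symm_apply.2 hne)⟩

theorem LeftMove.rename (h : LeftMove π ρ) (ν : Perm A) :
    LeftMove (pairRename π ν) (pairRename ρ ν) := by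
  obtain ⟨ε, ac, ao, hac, hao, hε, hfix, hao', hshift⟩ := h
  refine ⟨ε, ν.symm ac, ν.symm ao, ?_⟩
  simp only [pairRename, Equiv.trans_apply, Equiv.apply_symm_apply, hε]
  exact ⟨fun x ↦ hac _, fun x ↦ hao _, trivial, fun x ↦ hfix _, hao',
    fun x hx hne ↦ hshift _ hx (mt ν.eq_symm_apply.2 hne)⟩

theorem pairRename_mem_EClass (h : ρ ∈ EClass π) (ν : Perm A) :
    pairRename ρ ν ∈ EClass (pairRename π ν) :=
  Relation.ReflTransGen.lift (pairRename · ν)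
    (fun _ _ ↦ Or.imp (RightMove.rename · ν) (LeftMove.rename · ν)) _ _ h

variable (π) in
/-- The renaming set `G(π)` as a submonoid of `Sym(A)`. -/
def renamingSubmonoid : Submonoid (Perm A) where
  carrier := renamings π
  one_mem' := Relation.ReflTransGen.refl
  mul_mem' {_ μ} hν hμ := Relation.ReflTransGen.trans hμ (pairRename_mem_EClass hν μ)

variable (π) in
/-- The renaming set `G(π)` as a subgroup of `Sym(A)`; inverses come for free because `Sym(A)` is
finite. -/
def renamingSubgroup : Subgroup (Perm A) where
  __ := renamingSubmonoid π
  inv_mem' {ν} hν := by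
    have hpowers : ν⁻¹ ∈ Submonoid.powers ν :=
      mem_powers_iff_mem_zpowers.2 (Subgroup.inv_mem _ (Subgroup.mem_zpowers ν))
    exact Submonoid.powers_le.2 (show ν ∈ renamingSubmonoid π from hν) hpowers

theorem mem_renamings_of_wordsReach {ν : Perm A} {ε : Bool}
    (h : WordsReach (words π ε) (words (pairRename π ν) ε)) : ν ∈ renamings π := by
  obtain ⟨ρ, hρ, hwords⟩ := h π ε rfl
  obtain ⟨hfst, hsnd⟩ := Prod.mk.inj hwords
  have hρν : ρ = pairRename π ν := by
    funext δ
    rcases Bool.eq_or_eq_not δ ε with rfl | rfl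
    · exact word_injective hfst
    · exact word_injective hsnd
  subst hρν
  exact hρ

theorem words_pairRename (ν : Perm A) (ε : Bool) :
    words (pairRename π ν) ε = ((words π ε).1.map ν.symm, (words π ε).2.map ν.symm) :=
  Prod.ext (word_trans _ ν) (word_trans _ ν)

theorem swap_mul_swap_mem_renamings [DecidableEq A] {a w z : A} {P Q P' Q' : List A} {ε : Bool}
    (h : words π ε = (a :: P ++ w :: Q ++ [z], z :: P' ++ w :: Q' ++ [a])) :
    Equiv.swap a w * Equiv.swap a z ∈ renamings π := by
  apply mem_renamings_of_wordsReach (ε := ε)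
  obtain ⟨htop, hbot⟩ := Prod.mk.inj h
  have hnodup_top := htop ▸ nodup_word (π ε)
  have hnodup_bot := hbot ▸ nodup_word (π !ε)
  obtain ⟨haw, haz, hwz⟩ : a ≠ w ∧ a ≠ z ∧ w ≠ z := by
    clear hnodup_bot
    grind
  have hsymm : (Equiv.swap a w * Equiv.swap a z).symm = Equiv.swap a z * Equiv.swap a w := rfl
  have hfix : ∀ u, u ≠ a → u ≠ w → u ≠ z → (Equiv.swap a z * Equiv.swap a w) u = u :=
    fun u ha hw hz ↦ by simp [swap_apply_of_ne_of_ne, *]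
  rw [words_pairRename, h, hsymm, map_cons_append_cons_append_singleton hnodup_top hfix,
    map_cons_append_cons_append_singleton hnodup_bot fun u hz hw ha ↦ hfix u ha hw hz]
  simpa [swap_apply_of_ne_of_ne, haw.symm, haz.symm, hwz, hwz.symm] using
    WordsReach.cycle_letters a w z P Q P' Q'

end Renamings

section Standard

variable [Nonempty A] {π : RPair A}

theorem PairStandard.irreducible (hπ : PairStandard π) : PairIrreducible π := by
  intro k hk
  have hlast : posLast A ≤ k := by
    have := hk ((π false).symm (posFirst A)) (by simp [posFirst])
    rwa [hπ.2] at this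
  have hle : Fintype.card A - 1 ≤ k := hlast
  omega

theorem PairStandard.exists_words_eq (hπ : PairStandard π) {a w z : A}
    (ha : π false a = posFirst A) (hz : π true z = posFirst A) (hwa : w ≠ a) (hwz : w ≠ z) :
    ∃ P Q P' Q', words π false = (a :: P ++ w :: Q ++ [z], z :: P' ++ w :: Q' ++ [a]) := by
  obtain rfl := (π false).eq_symm_apply.2 ha
  obtain rfl := (π true).eq_symm_apply.2 hz
  obtain ⟨P, Q, htop⟩ := exists_eq_cons_append_cons_append_singleton (head?_word (π false))
    (getLast?_word (π false)) (mem_word _ w) hwa (by rwa [← hπ.1, symm_apply_apply])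
  obtain ⟨P', Q', hbot⟩ := exists_eq_cons_append_cons_append_singleton (head?_word (π true))
    (getLast?_word (π true)) (mem_word _ w) hwz (by rwa [← hπ.2, symm_apply_apply])
  rw [← hπ.1, symm_apply_apply] at htop
  rw [← hπ.2, symm_apply_apply] at hbot
  exact ⟨P, Q, P', Q', Prod.ext htop hbot⟩

theorem PairStandard.alternatingGroup_subset_renamings [DecidableEq A] (hπ : PairStandard π) :
    (alternatingGroup A : Set (Perm A)) ⊆ renamings π := by
  suffices alternatingGroup A ≤ renamingSubgroup π from this
  refine alternatingGroup_le_of_forall_swap_mul_swap_mem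
    (a := (π false).symm (posFirst A)) (z := (π true).symm (posFirst A)) fun w hwa hwz ↦ ?_
  obtain ⟨P, Q, P', Q', hwords⟩ := hπ.exists_words_eq (by simp) (by simp) hwa hwz
  exact swap_mul_swap_mem_renamings hwords

end Standard

theorem stmt11_general {A : Type*} [Fintype A] [DecidableEq A] [Nonempty A] (π : RPair A)
    (hπ : PairStandard π) :
    PairIrreducible π ∧ (alternatingGroup A : Set (Equiv.Perm A)) ⊆ renamings π :=
  ⟨hπ.irreducible, hπ.alternatingGroup_subset_renamings⟩

/-- for `A = {a, b₁,…,b_n, c₁,…,c_n, z}` (2n+2 distinct letters)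
with `π₀ : a b₁ c₁ … b_n c_n z` and `π₁ : z c₁ b₁ … c_n b_n a`
(positions written 0-indexed; `b i` denotes `b_{i+1}`),
`π` is irreducible and `Alt(A) ⊆ G(π)`. -/
theorem stmt11 {A : Type*} [Fintype A] [DecidableEq A] [Nonempty A]
    (n : ℕ) (hn : 1 ≤ n) (a z : A) (b c : Fin n → A)
    (hcard : Fintype.card A = 2 * n + 2)
    (π : RPair A)
    (h0a : (π false a : ℕ) = 0)
    (h0b : ∀ i : Fin n, (π false (b i) : ℕ) = 2 * (i : ℕ) + 1)
    (h0c : ∀ i : Fin n, (π false (c i) : ℕ) = 2 * (i : ℕ) + 2)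
    (h0z : (π false z : ℕ) = 2 * n + 1)
    (h1z : (π true z : ℕ) = 0)
    (h1c : ∀ i : Fin n, (π true (c i) : ℕ) = 2 * (i : ℕ) + 1)
    (h1b : ∀ i : Fin n, (π true (b i) : ℕ) = 2 * (i : ℕ) + 2)
    (h1a : (π true a : ℕ) = 2 * n + 1) :
    PairIrreducible π ∧
      (alternatingGroup A : Set (Equiv.Perm A)) ⊆ renamings π := by
  have ha : (π false).symm (posFirst A) = a := (π false).symm_apply_eq.2 (Fin.ext h0a.symm)
  have hz : (π true).symm (posFirst A) = z := (π true).symm_apply_eq.2 (Fin.ext h1z.symm)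
  refine stmt11_general π ⟨?_, ?_⟩
  · exact Fin.ext (by simp [hz, h0z, posLast, hcard])
  · exact Fin.ext (by simp [ha, h1a, posLast, hcard])
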